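/- For all n ≥ 1 and k ≥ 0, the number of self-dual Fishburn matrices of reduced size n whose first row has sum k is twice the number of row-Fishburn matrices of size n whose last column has sum k; that is, |M(n,k)| = 2|RM(n,k)|. -/

import Mathlib

open Finset

/-- Square matrices of nonnegative integers of dimension `m` (0-based indexing). -/
abbrev Mat (m : ℕ) := Matrix (Fin m) (Fin m) ℕ

/-- Upper-triangular: all entries strictly below the main diagonal vanish. -/
def UT {m : ℕ} (M : Mat m) : Prop := ∀ i j : Fin m, (j : ℕ) < (i : ℕ) → M i j = 0

/-- The size of a matrix: the sum of all its entries. -/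
def msize {m : ℕ} (M : Mat m) : ℕ := ∑ i : Fin m, ∑ j : Fin m, M i j

/-- Row `i` contains a nonzero entry. -/
def rowNonzero {m : ℕ} (M : Mat m) (i : Fin m) : Prop := ∃ j, M i j ≠ 0

/-- Column `j` contains a nonzero entry. -/
def colNonzero {m : ℕ} (M : Mat m) (j : Fin m) : Prop := ∃ i, M i j ≠ 0

/-- The dual matrix: transpose along the antidiagonal, `M̄_{i,j} = M_{m+1-j,m+1-i}`. -/
def dual {m : ℕ} (M : Mat m) : Mat m := fun i j => M j.rev i.rev

/-- A matrix is self-dual if it equals its dual. -/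
def SelfDual {m : ℕ} (M : Mat m) : Prop := M = dual M

/-- A Fishburn matrix: upper-triangular, every row and every column contains a
nonzero entry. -/
def IsFishburn {m : ℕ} (M : Mat m) : Prop :=
  UT M ∧ (∀ i, rowNonzero M i) ∧ (∀ j, colNonzero M j)

/-- The reduced size: sum of the entries in NW-cells and diagonal cells
(in 1-based terms, cells `(i,j)` with `i + j ≤ m + 1`). -/
def reducedSize {m : ℕ} (M : Mat m) : ℕ :=
  ∑ i : Fin m, ∑ j : Fin m, if (i : ℕ) + (j : ℕ) + 1 ≤ m then M i j else 0

/-- The reduced matrix: all entries in SE-cells are replaced by zeros. -/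
def reduced {m : ℕ} (M : Mat m) : Mat m :=
  fun i j => if (i : ℕ) + (j : ℕ) + 1 ≤ m then M i j else 0

/-- A super triangular matrix: upper-triangular and all SE-cells are zero. -/
def SuperTri {m : ℕ} (M : Mat m) : Prop :=
  UT M ∧ ∀ i j : Fin m, m < (i : ℕ) + (j : ℕ) + 1 → M i j = 0

/-- The sum of the first row. -/
def firstRowSum {m : ℕ} (M : Mat m) : ℕ :=
  ∑ i : Fin m, ∑ j : Fin m, if (i : ℕ) = 0 then M i j else 0

/-- The sum of the last column. -/
def lastColSum {m : ℕ} (M : Mat m) : ℕ :=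
  ∑ i : Fin m, ∑ j : Fin m, if (j : ℕ) + 1 = m then M i j else 0

/-- The sum of the diagonal cells (cells `(i,j)` with `i + j = m + 1`, 1-based). -/
def diagSum {m : ℕ} (M : Mat m) : ℕ :=
  ∑ i : Fin m, ∑ j : Fin m, if (i : ℕ) + (j : ℕ) + 1 = m then M i j else 0

/-- The sum of the center column (column `k+1` of a matrix of dimension `2k+1`). -/
def centerColSum {m : ℕ} (M : Mat m) : ℕ :=
  ∑ i : Fin m, ∑ j : Fin m, if 2 * (j : ℕ) + 1 = m then M i j else 0

/-- Square matrices of arbitrary dimension. -/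
abbrev SMat := Σ m : ℕ, Mat m

/-- `M(n)`: self-dual Fishburn matrices of reduced size `n`. -/
def Mset (n : ℕ) : Set SMat :=
  {A | IsFishburn A.2 ∧ SelfDual A.2 ∧ reducedSize A.2 = n}

/-- `M(n,k)`: matrices of `M(n)` whose first row has sum `k`. -/
def Mset₂ (n k : ℕ) : Set SMat := {A ∈ Mset n | firstRowSum A.2 = k}

/-- `M(n,k,p)`: matrices of `M(n,k)` whose diagonal cells have sum `p`. -/
def Mset₃ (n k p : ℕ) : Set SMat := {A ∈ Mset₂ n k | diagSum A.2 = p}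

/-- `EM(n,k)`: matrices of `M(n,k)` of even dimension. -/
def EMset (n k : ℕ) : Set SMat := {A ∈ Mset₂ n k | Even A.1}

/-- `OM(n,k)`: matrices of `M(n,k)` of odd dimension. -/
def OMset (n k : ℕ) : Set SMat := {A ∈ Mset₂ n k | Odd A.1}

/-- `RM(n)`: row-Fishburn matrices of size `n`. -/
def RMset (n : ℕ) : Set SMat :=
  {A | UT A.2 ∧ (∀ i, rowNonzero A.2 i) ∧ msize A.2 = n}

/-- `RM(n,k)`: row-Fishburn matrices of size `n` whose last column has sum `k`. -/
def RMset₂ (n k : ℕ) : Set SMat := {A ∈ RMset n | lastColSum A.2 = k}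

/-- `RM(n,k,p)`: matrices of `RM(n,k)` whose first row has sum `p`. -/
def RMset₃ (n k p : ℕ) : Set SMat := {A ∈ RMset₂ n k | firstRowSum A.2 = p}

/-- `SM(n)`: super triangular matrices of size `n` and dimension `2k+1` such that
(a) each of the first `k` columns contains a nonzero entry, and
(b) for `1 ≤ i ≤ k`, row `k+1-i` or column `k+1+i` contains a nonzero entry
(0-based: for `a < k`, row `a` or column `b` with `a + b = 2k` is nonzero). -/
def SMset (n : ℕ) : Set SMat :=
  {A | SuperTri A.2 ∧ msize A.2 = n ∧
    ∃ k : ℕ, A.1 = 2 * k + 1 ∧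
      (∀ j : Fin A.1, (j : ℕ) < k → colNonzero A.2 j) ∧
      (∀ a b : Fin A.1, (a : ℕ) < k → (a : ℕ) + (b : ℕ) = 2 * k →
        rowNonzero A.2 a ∨ colNonzero A.2 b)}

/-- `SM(n,k,p)`: matrices of `SM(n)` whose first row has sum `k` and whose center
column has sum `p`. -/
def SMset₃ (n k p : ℕ) : Set SMat :=
  {A ∈ SMset n | firstRowSum A.2 = k ∧ centerColSum A.2 = p}

/-- `B(n)`: upper-triangular matrices of size `n` in which every row except
possibly the first contains a nonzero entry. -/
def Bset (n : ℕ) : Set SMat :=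
  {A | UT A.2 ∧ (∀ i : Fin A.1, (i : ℕ) ≠ 0 → rowNonzero A.2 i) ∧ msize A.2 = n}

/-- `B(n,k,p)`: matrices of `B(n)` whose first row has sum `p` and whose last
column has sum `k`. -/
def Bset₃ (n k p : ℕ) : Set SMat :=
  {A ∈ Bset n | firstRowSum A.2 = p ∧ lastColSum A.2 = k}

/-!
A self-dual matrix is determined by its reduced matrix, which we read as the list of its columns,
and the dual of a row-Fishburn matrix is a list of nonzero columns of which the `j`-th has height
at most `j`. We build a reduced matrix from the inside out. At each step the next innermost column
`v` of the list is put on the left, and a column `u` opposite to it on the right; here `u` may be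
zero unless the new row is empty as well. This one forbidden configuration is what encodes the
nonzero choices of `u`: when `v` is put opposite to `u = 0` and the new row is empty, that row is
deleted, and `v` is kept as the right column `u` of the next step. No column can be left over at the
end, since by then it would have height zero. The innermost column of the list may either be taken
as the central column of a matrix of odd dimension, or be treated like the others, which leads to
a matrix of even dimension; this gives the factor `2`.
-/

/-- A column with rows numbered from `0` and padded by zeros. The padding makes the operation of
inserting an empty row into a list of columns independent of the sizes of the columns. -/
abbrev Col := ℕ →₀ ℕ

/-- All entries of the column `v` in rows `q, q + 1, …` are zero, so `v` has height at most `q`. -/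
def VanishesFrom (q : ℕ) (v : Col) : Prop := ∀ i, q ≤ i → v i = 0

/-- The two statistics of the theorem, as an additive function of the columns of a matrix: the sum
of the entries and the entry in the first row. -/
noncomputable def weight : Col →+ ℕ × ℕ := Finsupp.degree.prod (Finsupp.applyAddHom 0)

lemma VanishesFrom.mono {p q : ℕ} {v : Col} (hv : VanishesFrom p v) (hpq : p ≤ q) :
    VanishesFrom q v :=
  fun i hi => hv i (hpq.trans hi)

lemma VanishesFrom.of_succ {q : ℕ} {v : Col} (hv : VanishesFrom (q + 1) v) (hq : v q = 0) :
    VanishesFrom q v := by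
  intro i hi
  obtain rfl | hi := hi.eq_or_lt
  exacts [hq, hv i hi]

lemma vanishesFrom_zero_iff {v : Col} : VanishesFrom 0 v ↔ v = 0 := by
  simp [VanishesFrom, Finsupp.ext_iff]

lemma weight_fst_pos {v : Col} (hv : v ≠ 0) : 0 < (weight v).1 :=
  Nat.pos_of_ne_zero ((Finsupp.degree_eq_zero_iff v).not.mpr hv)

lemma sum_apply_eq_zero_iff {l : List Col} {i : ℕ} : l.sum i = 0 ↔ ∀ v ∈ l, v i = 0 := by
  have hsum : l.sum i = (l.map (Finsupp.applyAddHom i)).sum :=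
    map_list_sum (Finsupp.applyAddHom i) l
  rw [hsum, List.sum_eq_zero_iff]
  simp

/-! ### Inserting and deleting an empty row -/

/-- The increasing enumeration of the row indices other than `p`. -/
def skipRow (p i : ℕ) : ℕ := if i < p then i else i + 1

lemma skipRow_injective (p : ℕ) : Function.Injective (skipRow p) := by
  intro i j h
  simp only [skipRow] at h
  grind

lemma range_skipRow (p : ℕ) : Set.range (skipRow p) = {p}ᶜ := by
  ext i
  simp only [Set.mem_range, Set.mem_compl_singleton_iff, skipRow]
  refine ⟨by grind, fun h => ⟨if i < p then i else i - 1, by grind⟩⟩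

/-- Insert a zero entry in row `p` of a column, moving the rows `p, p + 1, …` down. -/
noncomputable def insertRow (p : ℕ) : Col →+ Col := Finsupp.mapDomain.addMonoidHom (skipRow p)

/-- Delete row `p` of a column, moving the rows `p + 1, p + 2, …` up. -/
noncomputable def deleteRow (p : ℕ) (v : Col) : Col :=
  v.comapDomain (skipRow p) (skipRow_injective p).injOn

lemma insertRow_injective (p : ℕ) : Function.Injective (insertRow p) :=
  Finsupp.mapDomain_injective (skipRow_injective p)

lemma insertRow_apply_self (p : ℕ) (v : Col) : insertRow p v p = 0 :=
  Finsupp.mapDomain_of_notMem_range v p (by simp [range_skipRow])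

lemma insertRow_apply_skipRow (p : ℕ) (v : Col) (i : ℕ) : insertRow p v (skipRow p i) = v i :=
  Finsupp.mapDomain_apply (skipRow_injective p) v i

lemma insertRow_apply_of_lt {p i : ℕ} (hi : i < p) (v : Col) : insertRow p v i = v i := by
  simpa [skipRow, hi] using insertRow_apply_skipRow p v i

lemma insertRow_apply_succ {p i : ℕ} (hi : p ≤ i) (v : Col) : insertRow p v (i + 1) = v i := by
  simpa [skipRow, hi.not_gt] using insertRow_apply_skipRow p v i

lemma deleteRow_insertRow (p : ℕ) (v : Col) : deleteRow p (insertRow p v) = v :=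
  Finsupp.comapDomain_mapDomain _ (skipRow_injective p) v

lemma insertRow_deleteRow {p : ℕ} {v : Col} (hv : v p = 0) : insertRow p (deleteRow p v) = v := by
  refine Finsupp.mapDomain_comapDomain _ (skipRow_injective p) v fun i hi => ?_
  rw [range_skipRow]
  rintro rfl
  exact Finsupp.mem_support_iff.mp hi hv

lemma map_deleteRow_map_insertRow (p : ℕ) (l : List Col) :
    (l.map (insertRow p)).map (deleteRow p) = l := by
  simp [Function.comp_def, deleteRow_insertRow]

lemma map_insertRow_map_deleteRow {p : ℕ} {l : List Col} (hl : l.sum p = 0) :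
    (l.map (deleteRow p)).map (insertRow p) = l := by
  rw [List.map_map]
  refine (List.map_congr_left fun v hv => ?_).trans (List.map_id l)
  exact insertRow_deleteRow (sum_apply_eq_zero_iff.mp hl v hv)

lemma vanishesFrom_insertRow_iff {p q : ℕ} (hpq : p ≤ q) {v : Col} :
    VanishesFrom (q + 1) (insertRow p v) ↔ VanishesFrom q v := by
  constructor
  · intro h i hi
    rw [← insertRow_apply_succ (hpq.trans hi)]
    exact h (i + 1) (by lia)
  · intro h i hi
    obtain ⟨i, rfl⟩ := Nat.exists_eq_add_of_le' (Nat.one_le_of_lt hi)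
    rw [insertRow_apply_succ (by lia)]
    exact h i (by lia)

lemma weight_insertRow {p : ℕ} (hp : 0 < p) (v : Col) : weight (insertRow p v) = weight v :=
  Prod.ext (Finsupp.degree_mapDomain (skipRow p) v) (insertRow_apply_of_lt hp v)

/-! ### Lists of columns of row-Fishburn and of reduced self-dual Fishburn matrices -/

/-- The columns of the dual of a row-Fishburn matrix, with `q` further rows put on top: the columns
are nonzero and the entries vanish below the main diagonal, which is moved down by `q`. -/
def IsColFishburn (q : ℕ) (l : List Col) : Prop :=
  ∀ (j : ℕ) (hj : j < l.length), l[j] ≠ 0 ∧ VanishesFrom (q + j + 1) l[j]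

/-- The condition on column `j` of the reduced matrix of a self-dual Fishburn matrix of dimension
`m` with row sums `s`, with `q` further rows put on top. A column of the Fishburn matrix which is
not in the left half of the matrix and vanishes in the reduced matrix is dual to a nonzero row of
the latter. -/
def IsReducedColumn (q m : ℕ) (s : Col) (j : ℕ) (v : Col) : Prop :=
  VanishesFrom (q + min (j + 1) (m - j)) v ∧ (v ≠ 0 ∨ m ≤ 2 * j ∧ s (q + (m - 1 - j)) ≠ 0)

/-- The columns of the reduced matrix of a self-dual Fishburn matrix, with `q` further rows put on
top. -/
def IsReducedFishburn (q : ℕ) (l : List Col) : Prop :=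
  ∀ (j : ℕ) (hj : j < l.length), IsReducedColumn q l.length l.sum j l[j]

lemma isColFishburn_cons {q : ℕ} {v : Col} {l : List Col} :
    IsColFishburn q (v :: l) ↔ v ≠ 0 ∧ VanishesFrom (q + 1) v ∧ IsColFishburn (q + 1) l := by
  constructor
  · intro h
    refine ⟨(h 0 (by simp)).1, (h 0 (by simp)).2, fun j hj => ?_⟩
    have hj' := h (j + 1) (by simpa using hj)
    rwa [List.getElem_cons_succ, ← add_assoc, add_right_comm q j 1] at hj'
  · rintro ⟨hv, hvq, h⟩ (_ | j) hj
    · exact ⟨hv, hvq⟩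
    · have hj' := h j (by simpa using hj)
      rwa [add_right_comm q 1 j, add_assoc q j 1] at hj'

lemma isReducedFishburn_toList_iff {q : ℕ} {b : Option Col} :
    IsReducedFishburn q b.toList ↔ IsColFishburn q b.toList := by
  rcases b with _ | v <;> simp [IsReducedFishburn, IsReducedColumn, IsColFishburn, and_comm]

lemma isReducedFishburn_map_insertRow {p q : ℕ} (hpq : p ≤ q) {l : List Col} :
    IsReducedFishburn (q + 1) (l.map (insertRow p)) ↔ IsReducedFishburn q l := by
  have hv (v : Col) (r : ℕ) :
      VanishesFrom (q + 1 + r) (insertRow p v) ↔ VanishesFrom (q + r) v := by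
    rw [add_right_comm, vanishesFrom_insertRow_iff (by lia)]
  have hs (r : ℕ) : insertRow p l.sum (q + 1 + r) = l.sum (q + r) := by
    rw [add_right_comm, insertRow_apply_succ (by lia)]
  simp only [IsReducedFishburn, IsReducedColumn, List.length_map, List.getElem_map,
    ← map_list_sum, hv, hs,
    (map_ne_zero_iff (insertRow p) (insertRow_injective p))]

lemma isReducedColumn_first_iff {q m : ℕ} {s v : Col} :
    IsReducedColumn q (m + 1) s 0 v ↔ v ≠ 0 ∧ VanishesFrom (q + 1) v := by
  simp [IsReducedColumn, and_comm]

lemma isReducedColumn_last_iff {q m : ℕ} {s u : Col} :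
    IsReducedColumn q (m + 2) s (m + 1) u ↔ VanishesFrom (q + 1) u ∧ ¬(u = 0 ∧ s q = 0) := by
  have hm : m + 2 ≤ 2 * (m + 1) := by lia
  simp [IsReducedColumn, hm, imp_iff_not_or]

lemma isReducedColumn_inner_iff {q m j : ℕ} (hj : j < m) {s t v : Col}
    (hst : ∀ i, q + 1 ≤ i → s i = t i) :
    IsReducedColumn q (m + 2) s (j + 1) v ↔ IsReducedColumn (q + 1) m t j v := by
  have hheight : q + min (j + 1 + 1) (m + 2 - (j + 1)) = q + 1 + min (j + 1) (m - j) := by lia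
  have hrow : q + (m + 2 - 1 - (j + 1)) = q + 1 + (m - 1 - j) := by lia
  have hright : m + 2 ≤ 2 * (j + 1) ↔ m ≤ 2 * j := by lia
  rw [IsReducedColumn, IsReducedColumn, hheight, hrow, hright, hst _ (by lia)]

lemma isReducedFishburn_cons_append {q : ℕ} {v u : Col} {l : List Col} :
    IsReducedFishburn q (v :: (l ++ [u])) ↔ v ≠ 0 ∧ VanishesFrom (q + 1) v ∧
      VanishesFrom (q + 1) u ∧ IsReducedFishburn (q + 1) l ∧ ¬(u = 0 ∧ (v + l.sum) q = 0) := by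
  set s : Col := (v :: (l ++ [u])).sum with hs
  have hsum (i : ℕ) : s i = v i + l.sum i + u i := by simp [hs, add_assoc]
  have hlast : VanishesFrom (q + 1) u ∧ ¬(u = 0 ∧ s q = 0) ↔
      VanishesFrom (q + 1) u ∧ ¬(u = 0 ∧ (v + l.sum) q = 0) := by
    have (hu : u = 0) : s q = (v + l.sum) q := by simp [hsum, hu]
    grind
  have hinner (hv : VanishesFrom (q + 1) v) (hu : VanishesFrom (q + 1) u) (i : ℕ)
      (hi : q + 1 ≤ i) : s i = l.sum i := by
    simp [hsum, hv i hi, hu i hi]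
  have hlen : (v :: (l ++ [u])).length = l.length + 2 := by simp
  constructor
  · intro h
    simp only [IsReducedFishburn, hlen, ← hs] at h
    obtain ⟨hv, hvq⟩ := isReducedColumn_first_iff.mp (h 0 (by lia))
    have hu := isReducedColumn_last_iff.mp (h (l.length + 1) (by lia))
    simp only [List.getElem_cons_succ, List.getElem_concat_length, hlast] at hu
    refine ⟨hv, hvq, hu.1, fun j hj => ?_, hu.2⟩
    have hj' := h (j + 1) (by lia)
    simp only [List.getElem_cons_succ, List.getElem_append_left hj] at hj'
    exact (isReducedColumn_inner_iff hj (hinner hvq hu.1)).mp hj'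
  · rintro ⟨hv, hvq, huq, h, hu⟩ j hj
    simp only [hlen, ← hs] at hj ⊢
    rcases j with _ | j
    · exact isReducedColumn_first_iff.mpr ⟨hv, hvq⟩
    obtain hj | rfl : j < l.length ∨ j = l.length := by lia
    · simp only [List.getElem_cons_succ, List.getElem_append_left hj]
      exact (isReducedColumn_inner_iff hj (hinner hvq huq)).mpr (h j hj)
    · simp only [List.getElem_cons_succ, List.getElem_concat_length]
      exact isReducedColumn_last_iff.mpr (hlast.mpr ⟨huq, hu⟩)

/-! ### Assembling a reduced matrix from the inside out -/

/-- The intermediate objects of the bijection: the columns `x.2` of a reduced self-dual Fishburn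
matrix below `q` further rows, together with a pending column `x.1`. A nonzero pending column is
to become the rightmost column at the next step, and `x.1 = 0` records its absence. -/
def IsPendingFishburn (q : ℕ) (x : Col × List Col) : Prop :=
  VanishesFrom q x.1 ∧ IsReducedFishburn q x.2

/-- Put the nonzero column `v` to the left of `x.2`, and opposite to it the pending column. If this
leaves both row `q` and the column dual to it empty, that row is deleted instead, and `v` becomes
the pending column. -/
noncomputable def pushColumn (q : ℕ) (v : Col) (x : Col × List Col) : Col × List Col :=
  if x.1 = 0 ∧ (v + x.2.sum) q = 0 then (v, x.2.map (deleteRow q))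
  else (0, v :: (x.2 ++ [x.1]))

lemma pushColumn_eq_pending {q : ℕ} {v : Col} {l : List Col} (h : (v + l.sum) q = 0) :
    pushColumn q v (0, l) = (v, l.map (deleteRow q)) :=
  if_pos ⟨rfl, h⟩

lemma pushColumn_eq_cons {q : ℕ} {v u : Col} {l : List Col}
    (h : ¬(u = 0 ∧ (v + l.sum) q = 0)) :
    pushColumn q v (u, l) = (0, v :: (l ++ [u])) :=
  if_neg h

lemma isPendingFishburn_pushColumn {q : ℕ} {v : Col} {x : Col × List Col} (hv : v ≠ 0)
    (hvq : VanishesFrom (q + 1) v) (hx : IsPendingFishburn (q + 1) x) :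
    IsPendingFishburn q (pushColumn q v x) := by
  obtain ⟨u, l⟩ := x
  by_cases h : u = 0 ∧ (v + l.sum) q = 0
  · obtain ⟨rfl, hq⟩ := h
    obtain ⟨hvz, hlz⟩ : v q = 0 ∧ l.sum q = 0 := by simpa using hq
    rw [pushColumn_eq_pending hq]
    refine ⟨hvq.of_succ hvz, ?_⟩
    rw [← isReducedFishburn_map_insertRow le_rfl, map_insertRow_map_deleteRow hlz]
    exact hx.2
  · rw [pushColumn_eq_cons h]
    exact ⟨fun _ _ => rfl, isReducedFishburn_cons_append.mpr ⟨hv, hvq, hx.1, hx.2, h⟩⟩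

lemma weight_pushColumn {q : ℕ} {v : Col} (hv : v ≠ 0) (hvq : VanishesFrom (q + 1) v)
    (x : Col × List Col) :
    weight ((pushColumn q v x).1 + (pushColumn q v x).2.sum) =
      weight v + weight (x.1 + x.2.sum) := by
  obtain ⟨u, l⟩ := x
  by_cases h : u = 0 ∧ (v + l.sum) q = 0
  · obtain ⟨rfl, hq⟩ := h
    obtain ⟨hvz, hlz⟩ : v q = 0 ∧ l.sum q = 0 := by simpa using hq
    have hpos : 0 < q := by
      rw [Nat.pos_iff_ne_zero]
      rintro rfl
      exact hv (vanishesFrom_zero_iff.mp (hvq.of_succ hvz))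
    have hl : weight (l.map (deleteRow q)).sum = weight l.sum := by
      rw [← weight_insertRow hpos, map_list_sum, map_insertRow_map_deleteRow hlz]
    rw [pushColumn_eq_pending hq, map_add, hl, zero_add]
  · simp [pushColumn_eq_cons h, add_comm]

lemma pushColumn_inj {q : ℕ} {v v' : Col} {x x' : Col × List Col} (hv : v ≠ 0) (hv' : v' ≠ 0) :
    pushColumn q v x = pushColumn q v' x' ↔ v = v' ∧ x = x' := by
  refine ⟨fun h => ?_, by rintro ⟨rfl, rfl⟩; rfl⟩
  obtain ⟨u, l⟩ := x
  obtain ⟨u', l'⟩ := x'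
  by_cases hx : u = 0 ∧ (v + l.sum) q = 0 <;> by_cases hx' : u' = 0 ∧ (v' + l'.sum) q = 0
  · obtain ⟨rfl, hq⟩ := hx
    obtain ⟨rfl, hq'⟩ := hx'
    rw [pushColumn_eq_pending hq, pushColumn_eq_pending hq', Prod.mk.injEq] at h
    obtain ⟨rfl, hl⟩ := h
    have hlz : l.sum q = 0 := by simp_all
    have hlz' : l'.sum q = 0 := by simp_all
    rw [← map_insertRow_map_deleteRow hlz, hl, map_insertRow_map_deleteRow hlz']
    exact ⟨rfl, rfl⟩
  · obtain ⟨rfl, hq⟩ := hx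
    rw [pushColumn_eq_pending hq, pushColumn_eq_cons hx', Prod.mk.injEq] at h
    exact absurd h.1 hv
  · obtain ⟨rfl, hq⟩ := hx'
    rw [pushColumn_eq_cons hx, pushColumn_eq_pending hq, Prod.mk.injEq] at h
    exact absurd h.1.symm hv'
  · rw [pushColumn_eq_cons hx, pushColumn_eq_cons hx'] at h
    simp_all

lemma pushColumn_ne_toList {q : ℕ} {v : Col} (hv : v ≠ 0) (x : Col × List Col) (b : Option Col) :
    pushColumn q v x ≠ (0, b.toList) := by
  unfold pushColumn
  split_ifs
  · simp [hv]
  · cases b <;> simp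

lemma IsPendingFishburn.eq_toList_or_eq_pushColumn {q : ℕ} {y : Col × List Col}
    (hy : IsPendingFishburn q y) :
    (∃ b : Option Col, IsColFishburn q b.toList ∧ y = (0, b.toList)) ∨
      ∃ v x, v ≠ 0 ∧ VanishesFrom (q + 1) v ∧ IsPendingFishburn (q + 1) x ∧
        y = pushColumn q v x := by
  obtain ⟨u, l⟩ := y
  obtain ⟨hu, hl⟩ : VanishesFrom q u ∧ IsReducedFishburn q l := hy
  by_cases hu0 : u = 0
  · subst hu0
    rcases l with _ | ⟨v, l⟩
    · exact .inl ⟨none, isReducedFishburn_toList_iff.mp hl, rfl⟩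
    obtain rfl | ⟨l, u, rfl⟩ := List.eq_nil_or_concat l
    · exact .inl ⟨some v, isReducedFishburn_toList_iff.mp hl, rfl⟩
    rw [List.concat_eq_append] at hl ⊢
    obtain ⟨hv, hvq, huq, hl, h⟩ := isReducedFishburn_cons_append.mp hl
    exact .inr ⟨v, (u, l), hv, hvq, ⟨huq, hl⟩, (pushColumn_eq_cons h).symm⟩
  · have hq : (u + (l.map (insertRow q)).sum) q = 0 := by
      rw [← map_list_sum, Finsupp.add_apply, hu q le_rfl, insertRow_apply_self]
    refine .inr ⟨u, (0, l.map (insertRow q)), hu0, hu.mono q.le_succ, ⟨fun _ _ => rfl, ?_⟩, ?_⟩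
    · exact (isReducedFishburn_map_insertRow le_rfl).mpr hl
    · rw [pushColumn_eq_pending hq, map_deleteRow_map_insertRow]

/-- The bijection from the columns of the dual of a row-Fishburn matrix to the columns of a reduced
self-dual Fishburn matrix. The central column `b` of the latter is absent when its dimension is
even. -/
noncomputable def assemble (q : ℕ) (vs : List Col) (b : Option Col) : Col × List Col :=
  match vs with
  | [] => (0, b.toList)
  | v :: vs => pushColumn q v (assemble (q + 1) vs b)

lemma isPendingFishburn_assemble {q : ℕ} {vs : List Col} {b : Option Col}
    (h : IsColFishburn q (vs ++ b.toList)) : IsPendingFishburn q (assemble q vs b) := by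
  induction vs generalizing q with
  | nil => exact ⟨fun _ _ => rfl, isReducedFishburn_toList_iff.mpr h⟩
  | cons v vs ih =>
    obtain ⟨hv, hvq, h⟩ := isColFishburn_cons.mp h
    exact isPendingFishburn_pushColumn hv hvq (ih h)

lemma weight_assemble {q : ℕ} {vs : List Col} {b : Option Col}
    (h : IsColFishburn q (vs ++ b.toList)) :
    weight ((assemble q vs b).1 + (assemble q vs b).2.sum) = weight (vs ++ b.toList).sum := by
  induction vs generalizing q with
  | nil => simp [assemble]
  | cons v vs ih =>
    obtain ⟨hv, hvq, h⟩ := isColFishburn_cons.mp h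
    rw [assemble, weight_pushColumn hv hvq, ih h, List.cons_append, List.sum_cons, map_add]

lemma assemble_inj {q : ℕ} {vs vs' : List Col} {b b' : Option Col}
    (h : IsColFishburn q (vs ++ b.toList)) (h' : IsColFishburn q (vs' ++ b'.toList)) :
    assemble q vs b = assemble q vs' b' ↔ vs = vs' ∧ b = b' := by
  refine ⟨fun heq => ?_, by rintro ⟨rfl, rfl⟩; rfl⟩
  induction vs generalizing q vs' with
  | nil =>
    rcases vs' with _ | ⟨v', vs'⟩
    · have hb : b.toList = b'.toList := congrArg Prod.snd heq
      cases b <;> cases b' <;> simp_all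
    · exact absurd heq.symm (pushColumn_ne_toList (isColFishburn_cons.mp h').1 _ b)
  | cons v vs ih =>
    obtain ⟨hv, -, hvs⟩ := isColFishburn_cons.mp h
    rcases vs' with _ | ⟨v', vs'⟩
    · exact absurd heq (pushColumn_ne_toList hv _ b')
    · obtain ⟨hv', -, hvs'⟩ := isColFishburn_cons.mp h'
      obtain ⟨rfl, htail⟩ := (pushColumn_inj hv hv').mp heq
      obtain ⟨rfl, rfl⟩ := ih hvs hvs' htail
      exact ⟨rfl, rfl⟩

lemma IsPendingFishburn.exists_assemble_eq {q : ℕ} {y : Col × List Col}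
    (hy : IsPendingFishburn q y) :
    ∃ vs b, IsColFishburn q (vs ++ b.toList) ∧ assemble q vs b = y := by
  induction hd : (weight (y.1 + y.2.sum)).1 using Nat.strong_induction_on generalizing q y with
  | _ d ih =>
    obtain ⟨b, hb, rfl⟩ | ⟨v, x, hv, hvq, hx, rfl⟩ := hy.eq_toList_or_eq_pushColumn
    · exact ⟨[], b, hb, rfl⟩
    · have hlt : (weight (x.1 + x.2.sum)).1 < d := by
        rw [← hd, weight_pushColumn hv hvq]
        exact Nat.lt_add_of_pos_left (weight_fst_pos hv)
      obtain ⟨vs, b, h, rfl⟩ := ih _ hlt hx rfl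
      exact ⟨v :: vs, b, isColFishburn_cons.mpr ⟨hv, hvq, h⟩, rfl⟩

lemma bijOn_assemble (w : ℕ × ℕ) :
    Set.BijOn (fun s : List Col × Option Col => (assemble 0 s.1 s.2).2)
      {s | s.1 ++ s.2.toList ∈ {l | IsColFishburn 0 l ∧ weight l.sum = w}}
      {l | IsReducedFishburn 0 l ∧ weight l.sum = w} := by
  have hpending {s : List Col × Option Col} (hs : IsColFishburn 0 (s.1 ++ s.2.toList)) :
      (assemble 0 s.1 s.2).1 = 0 :=
    vanishesFrom_zero_iff.mp (isPendingFishburn_assemble hs).1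
  refine ⟨fun s hs => ⟨(isPendingFishburn_assemble hs.1).2, ?_⟩, fun s hs t ht hst => ?_,
    fun l hl => ?_⟩
  · rw [← hs.2, ← weight_assemble hs.1, hpending hs.1, zero_add]
  · have heq := Prod.ext ((hpending hs.1).trans (hpending ht.1).symm) hst
    exact Prod.ext_iff.mpr ((assemble_inj hs.1 ht.1).mp heq)
  · obtain ⟨vs, b, h, heq⟩ :=
      IsPendingFishburn.exists_assemble_eq (y := (0, l)) ⟨fun _ _ => rfl, hl.1⟩
    refine ⟨(vs, b), ⟨h, ?_⟩, congrArg Prod.snd heq⟩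
    rw [← weight_assemble h, heq, ← hl.2, zero_add]

lemma ncard_setOf_append_toList_mem {α : Type*} {S : Set (List α)} (hS : [] ∉ S) :
    {s : List α × Option α | s.1 ++ s.2.toList ∈ S}.ncard = 2 * S.ncard := by
  let whole (l : List α) : List α × Option α := (l, none)
  let splitLast (l : List α) : List α × Option α := (l.dropLast, l.getLast?)
  have happend (l : List α) : (splitLast l).1 ++ (splitLast l).2.toList = l := by
    obtain rfl | ⟨l, a, rfl⟩ := List.eq_nil_or_concat l <;> simp [splitLast]
  have hwhole : Function.Injective whole := fun l l' h => congrArg Prod.fst h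
  have hsplit : Function.Injective splitLast := fun l l' h => by
    rw [← happend l, h, happend l']
  have hunion : {s : List α × Option α | s.1 ++ s.2.toList ∈ S} = whole '' S ∪ splitLast '' S := by
    ext ⟨l, b⟩
    constructor
    · intro h
      rcases b with _ | a
      · exact .inl ⟨l, by simpa using h, rfl⟩
      · exact .inr ⟨l ++ [a], h, by simp [splitLast]⟩
    · rintro (⟨l, hl, h⟩ | ⟨l, hl, h⟩)
      · simpa [← h, whole] using hl
      · simpa [← h, happend] using hl
  have hdisj : Disjoint (whole '' S) (splitLast '' S) := by
    rw [Set.disjoint_left]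
    rintro _ ⟨l, -, rfl⟩ ⟨l', hl', h⟩
    have hnil : l' = [] := List.getLast?_eq_none_iff.mp (congrArg Prod.snd h)
    exact hS (hnil ▸ hl')
  rw [hunion, Set.ncard_def, Set.encard_union_eq hdisj, hwhole.injOn.encard_image,
    hsplit.injOn.encard_image, ← two_mul, ENat.toNat_mul]
  rfl

/-! ### Columns of matrices -/

/-- Column `j` of the matrix `M`, padded by zeros. -/
noncomputable def column {m : ℕ} (M : Mat m) (j : Fin m) : Col :=
  Finsupp.mapDomain Fin.val (Finsupp.equivFunOnFinite.symm fun i => M i j)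

/-- The list of the columns of a matrix, from left to right. -/
noncomputable def columns {m : ℕ} (M : Mat m) : List Col := List.ofFn (column M)

section Columns

variable {m : ℕ} (M : Mat m)

lemma column_apply_val (j i : Fin m) : column M j i = M i j :=
  Finsupp.mapDomain_apply Fin.val_injective _ i

lemma column_apply_of_le (j : Fin m) {i : ℕ} (hi : m ≤ i) : column M j i = 0 :=
  Finsupp.mapDomain_of_notMem_range _ _ (by simpa using hi)

variable {M}

lemma vanishesFrom_column_iff {q : ℕ} {j : Fin m} :
    VanishesFrom q (column M j) ↔ ∀ i : Fin m, q ≤ i → M i j = 0 := by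
  refine ⟨fun h i hi => column_apply_val M j i ▸ h i hi, fun h i hi => ?_⟩
  obtain him | him := lt_or_ge i m
  · exact (column_apply_val M j ⟨i, him⟩).trans (h ⟨i, him⟩ hi)
  · exact column_apply_of_le M j him

lemma column_ne_zero_iff {j : Fin m} : column M j ≠ 0 ↔ colNonzero M j := by
  rw [ne_eq, ← vanishesFrom_zero_iff, vanishesFrom_column_iff]
  simp [colNonzero]

lemma length_columns : (columns M).length = m := List.length_ofFn

lemma sum_columns_ne_zero_iff {i : Fin m} : (columns M).sum i ≠ 0 ↔ rowNonzero M i := by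
  rw [ne_eq, sum_apply_eq_zero_iff]
  simp [columns, rowNonzero, List.mem_ofFn, column_apply_val]

variable (M)

lemma weight_column (j : Fin m) :
    weight (column M j) = (∑ i, M i j, ∑ i : Fin m, if (i : ℕ) = 0 then M i j else 0) := by
  have hm : 0 < m := j.pos
  have hfirst (i : Fin m) : (i : ℕ) = 0 ↔ i = ⟨0, hm⟩ := by
    rw [Fin.ext_iff]
  refine Prod.ext ?_ ?_
  · exact (Finsupp.degree_mapDomain _ _).trans (Finsupp.degree_eq_sum _)
  · simp only [hfirst, Finset.sum_ite_eq', Finset.mem_univ, if_true]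
    exact column_apply_val M j ⟨0, hm⟩

lemma weight_sum_columns : weight (columns M).sum = (msize M, firstRowSum M) := by
  rw [columns, List.sum_ofFn, map_sum]
  simp only [weight_column, Prod.ext_iff, Prod.fst_sum, Prod.snd_sum]
  exact ⟨Finset.sum_comm, Finset.sum_comm⟩

end Columns

lemma columns_injective : Function.Injective fun A : SMat => columns A.2 := by
  rintro ⟨m, M⟩ ⟨m', M'⟩ h
  obtain rfl : m = m' := by simpa [length_columns] using congrArg List.length h
  have hcolumn : column M = column M' := List.ofFn_injective h
  congr
  ext i j
  rw [← column_apply_val M, hcolumn, column_apply_val]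

lemma exists_columns_eq {l : List Col} (hl : ∀ v ∈ l, VanishesFrom l.length v) :
    ∃ A : SMat, columns A.2 = l := by
  let M : Mat l.length := fun i j => l[j] i
  refine ⟨⟨l.length, M⟩, List.ext_getElem length_columns fun j _ hj => Finsupp.ext fun i => ?_⟩
  simp only [columns, List.getElem_ofFn]
  obtain hi | hi := lt_or_ge i l.length
  · exact column_apply_val M ⟨j, hj⟩ ⟨i, hi⟩
  · rw [column_apply_of_le M _ hi, hl _ (List.getElem_mem hj) i hi]

lemma bijOn_columns {S : Set (List Col)} (hS : ∀ l ∈ S, ∀ v ∈ l, VanishesFrom l.length v) :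
    Set.BijOn (fun A : SMat => columns A.2) {A | columns A.2 ∈ S} S := by
  refine ⟨fun A hA => hA, columns_injective.injOn, fun l hl => ?_⟩
  obtain ⟨A, rfl⟩ := exists_columns_eq (hS l hl)
  exact ⟨A, hl, rfl⟩

/-! ### Row-Fishburn matrices -/

lemma isColFishburn_columns_iff {m : ℕ} {M : Mat m} :
    IsColFishburn 0 (columns M) ↔ UT M ∧ ∀ j, colNonzero M j := by
  simp only [IsColFishburn, columns, List.length_ofFn, List.getElem_ofFn, column_ne_zero_iff,
    vanishesFrom_column_iff, zero_add]
  exact ⟨fun h => ⟨fun i j hij => (h j j.2).2 i hij, fun j => (h j j.2).1⟩,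
    fun h j hj => ⟨h.2 ⟨j, hj⟩, fun i hi => h.1 i ⟨j, hj⟩ hi⟩⟩

lemma IsColFishburn.vanishesFrom_length {l : List Col} (hl : IsColFishburn 0 l) :
    ∀ v ∈ l, VanishesFrom l.length v := by
  intro v hv
  obtain ⟨j, hj, rfl⟩ := List.getElem_of_mem hv
  exact (hl j hj).2.mono (by lia)

lemma sum_sum_rev {m : ℕ} (f : Fin m → Fin m → ℕ) :
    ∑ i, ∑ j, f (Fin.rev j) (Fin.rev i) = ∑ i, ∑ j, f i j := by
  rw [Finset.sum_comm]
  exact Fintype.sum_equiv Fin.revPerm _ _ fun i => Fintype.sum_equiv Fin.revPerm _ _ fun j => rfl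

section Dual

variable {m : ℕ} (M : Mat m)

lemma dual_dual : dual (dual M) = M := by
  ext i j
  simp [dual]

lemma msize_dual : msize (dual M) = msize M := sum_sum_rev M

lemma firstRowSum_dual : firstRowSum (dual M) = lastColSum M := by
  rw [lastColSum, ← sum_sum_rev, firstRowSum]
  have hlast (i : Fin m) : (i.rev : ℕ) + 1 = m ↔ (i : ℕ) = 0 := by
    rw [Fin.val_rev]
    lia
  simp only [hlast, dual]

variable {M}

lemma UT.dual (hM : UT M) : UT (dual M) :=
  fun i j hij => hM j.rev i.rev (by simpa only [Fin.val_fin_lt, Fin.rev_lt_rev] using hij)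

lemma colNonzero_dual_iff {j : Fin m} : colNonzero (dual M) j ↔ rowNonzero M j.rev :=
  (Fin.rev_surjective.exists (p := fun c => M j.rev c ≠ 0)).symm

end Dual

lemma mem_RMset₂_iff {n k : ℕ} {A : SMat} :
    A ∈ RMset₂ n k ↔ IsColFishburn 0 (columns (dual A.2)) ∧
      weight (columns (dual A.2)).sum = (n, k) := by
  have hUT : UT (dual A.2) ↔ UT A.2 := ⟨fun h => dual_dual A.2 ▸ h.dual, UT.dual⟩
  have hrow : (∀ j, colNonzero (dual A.2) j) ↔ ∀ i, rowNonzero A.2 i := by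
    simp only [colNonzero_dual_iff]
    exact Fin.rev_surjective.forall.symm
  rw [isColFishburn_columns_iff, hUT, hrow, weight_sum_columns, msize_dual, firstRowSum_dual,
    Prod.mk.injEq]
  simp only [RMset₂, RMset, Set.mem_ofPred_eq, and_assoc]

lemma bijOn_columns_dual (n k : ℕ) :
    Set.BijOn (fun A : SMat => columns (dual A.2)) (RMset₂ n k)
      {l | IsColFishburn 0 l ∧ weight l.sum = (n, k)} := by
  let dualize (A : SMat) : SMat := ⟨A.1, dual A.2⟩
  have hinv (A : SMat) : dualize (dualize A) = A := by simp [dualize, dual_dual]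
  have hdual : Set.BijOn dualize (RMset₂ n k)
      {A | columns A.2 ∈ {l | IsColFishburn 0 l ∧ weight l.sum = (n, k)}} :=
    Set.InvOn.bijOn (f' := dualize) ⟨fun A _ => hinv A, fun A _ => hinv A⟩
      (fun A hA => mem_RMset₂_iff.mp hA)
      (fun A hA => mem_RMset₂_iff.mpr (by rwa [dual_dual]))
  exact (bijOn_columns fun l hl => hl.1.vanishesFrom_length).comp hdual

/-! ### Self-dual Fishburn matrices -/

section SelfDual

variable {m : ℕ} {M N : Mat m}

lemma SelfDual.apply_eq (hM : SelfDual M) (i j : Fin m) : M i j = M j.rev i.rev :=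
  congrFun₂ hM i j

lemma reduced_apply {i j : Fin m} (hij : (i : ℕ) + j + 1 ≤ m) : reduced M i j = M i j := if_pos hij

lemma apply_ne_zero_of_reduced_apply_ne_zero {i j : Fin m} (hij : reduced M i j ≠ 0) :
    M i j ≠ 0 :=
  fun h => hij (by simp [reduced, h])

lemma SelfDual.reduced_rev_apply (hM : SelfDual M) {i j : Fin m} (hij : m ≤ (i : ℕ) + j + 1) :
    reduced M j.rev i.rev = M i j := by
  rw [reduced_apply (by grind), ← hM.apply_eq]

lemma SelfDual.ut_iff_superTri_reduced (hM : SelfDual M) : UT M ↔ SuperTri (reduced M) := by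
  refine ⟨fun h => ⟨fun i j hij => ?_, fun i j hij => if_neg hij.not_ge⟩, fun h i j hij => ?_⟩
  · simp [reduced, h i j hij]
  · obtain hle | hge := le_total ((i : ℕ) + j + 1) m
    · rw [← reduced_apply (M := M) hle, h.1 i j hij]
    · rw [← hM.reduced_rev_apply hge, h.1 j.rev i.rev (Fin.rev_lt_rev.mpr hij)]

lemma SelfDual.rowNonzero_iff (hM : SelfDual M) {i : Fin m} :
    rowNonzero M i ↔ colNonzero M i.rev := by
  rw [hM, colNonzero_dual_iff, ← hM, Fin.rev_rev]

lemma SelfDual.colNonzero_iff (hM : SelfDual M) {j : Fin m} :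
    colNonzero M j ↔ colNonzero (reduced M) j ∨ rowNonzero (reduced M) j.rev := by
  constructor
  · rintro ⟨i, hi⟩
    obtain hle | hge := le_total ((i : ℕ) + j + 1) m
    · exact .inl ⟨i, (reduced_apply hle).trans_ne hi⟩
    · exact .inr ⟨i.rev, (hM.reduced_rev_apply hge).trans_ne hi⟩
  · rintro (⟨i, hi⟩ | ⟨i, hi⟩)
    · exact ⟨i, apply_ne_zero_of_reduced_apply_ne_zero hi⟩
    · rw [← j.rev_rev, ← hM.rowNonzero_iff]
      exact ⟨i, apply_ne_zero_of_reduced_apply_ne_zero hi⟩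

lemma SelfDual.isFishburn_iff (hM : SelfDual M) :
    IsFishburn M ↔ SuperTri (reduced M) ∧
      ∀ j, colNonzero (reduced M) j ∨ rowNonzero (reduced M) j.rev := by
  simp only [IsFishburn, hM.ut_iff_superTri_reduced, ← hM.colNonzero_iff, hM.rowNonzero_iff]
  rw [← Fin.rev_surjective.forall (p := colNonzero M), and_self]

lemma firstRowSum_reduced : firstRowSum (reduced M) = firstRowSum M := by
  refine Finset.sum_congr rfl fun i _ => Finset.sum_congr rfl fun j _ => ?_
  split_ifs with hi
  exacts [reduced_apply (by lia), rfl]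

/-- The self-dual matrix whose entries outside the SE-cells are those of `N`. -/
def selfDualExtension (N : Mat m) : Mat m :=
  fun i j => if (i : ℕ) + j + 1 ≤ m then N i j else N j.rev i.rev

lemma selfDual_selfDualExtension : SelfDual (selfDualExtension N) := by
  ext i j
  simp only [dual, selfDualExtension, Fin.rev_rev]
  grind

lemma SelfDual.selfDualExtension_reduced (hM : SelfDual M) :
    selfDualExtension (reduced M) = M := by
  ext i j
  obtain hle | hgt := le_or_gt ((i : ℕ) + j + 1) m
  · rw [selfDualExtension, if_pos hle, reduced_apply hle]
  · rw [selfDualExtension, if_neg hgt.not_ge, hM.reduced_rev_apply hgt.le]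

lemma SuperTri.reduced_selfDualExtension (hN : SuperTri N) :
    reduced (selfDualExtension N) = N := by
  ext i j
  obtain hle | hgt := le_or_gt ((i : ℕ) + j + 1) m
  · rw [reduced_apply hle, selfDualExtension, if_pos hle]
  · rw [reduced, if_neg hgt.not_ge, hN.2 i j hgt]

lemma superTri_iff_vanishesFrom_column :
    SuperTri N ↔ ∀ j : Fin m, VanishesFrom (min ((j : ℕ) + 1) (m - j)) (column N j) := by
  simp only [vanishesFrom_column_iff]
  refine ⟨fun h j i hi => ?_, fun h => ⟨fun i j hij => h j i ?_, fun i j hij => h j i ?_⟩⟩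
  · obtain hi | hi := min_le_iff.mp hi
    exacts [h.1 i j (by lia), h.2 i j (by lia)]
  all_goals lia

lemma SuperTri.colNonzero_of_rowNonzero_rev (hN : SuperTri N) {j : Fin m} (hj : 2 * (j : ℕ) < m)
    (h : rowNonzero N j.rev) : colNonzero N j := by
  obtain ⟨c, hc⟩ := h
  have hUT : (j.rev : ℕ) ≤ c := not_lt.mp (mt (hN.1 _ _) hc)
  have hNW : (j.rev : ℕ) + c + 1 ≤ m := not_lt.mp (mt (hN.2 _ _) hc)
  obtain rfl : c = j := by grind
  exact ⟨_, hc⟩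

lemma isReducedFishburn_columns_iff :
    IsReducedFishburn 0 (columns N) ↔
      SuperTri N ∧ ∀ j, colNonzero N j ∨ rowNonzero N j.rev := by
  have hcolumns : IsReducedFishburn 0 (columns N) ↔
      ∀ j : Fin m, IsReducedColumn 0 m (columns N).sum j (column N j) := by
    simp only [IsReducedFishburn, length_columns]
    simp [columns, Fin.forall_iff]
  have hrow (j : Fin m) : (columns N).sum (m - 1 - j) ≠ 0 ↔ rowNonzero N j.rev := by
    rw [← sum_columns_ne_zero_iff, Fin.val_rev, Nat.sub_sub, add_comm 1]
  simp only [hcolumns, IsReducedColumn, zero_add, column_ne_zero_iff, hrow, forall_and,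
    ← superTri_iff_vanishesFrom_column]
  refine and_congr_right fun hN => forall_congr' fun j => ?_
  have := hN.colNonzero_of_rowNonzero_rev (j := j)
  grind

end SelfDual

lemma mem_Mset₂_iff {n k : ℕ} {A : SMat} (hA : SelfDual A.2) :
    A ∈ Mset₂ n k ↔ IsReducedFishburn 0 (columns (reduced A.2)) ∧
      weight (columns (reduced A.2)).sum = (n, k) := by
  rw [isReducedFishburn_columns_iff, ← hA.isFishburn_iff, weight_sum_columns, firstRowSum_reduced,
    Prod.mk.injEq]
  simp only [Mset₂, Mset, Set.mem_ofPred_eq, hA, true_and, and_assoc]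
  rfl

lemma IsReducedFishburn.vanishesFrom_length {l : List Col} (hl : IsReducedFishburn 0 l) :
    ∀ v ∈ l, VanishesFrom l.length v := by
  intro v hv
  obtain ⟨j, hj, rfl⟩ := List.getElem_of_mem hv
  exact (hl j hj).1.mono (by lia)

lemma bijOn_columns_reduced (n k : ℕ) :
    Set.BijOn (fun A : SMat => columns (reduced A.2)) (Mset₂ n k)
      {l | IsReducedFishburn 0 l ∧ weight l.sum = (n, k)} := by
  let toReduced (A : SMat) : SMat := ⟨A.1, reduced A.2⟩
  let extend (A : SMat) : SMat := ⟨A.1, selfDualExtension A.2⟩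
  have hselfDual {A : SMat} (hA : A ∈ Mset₂ n k) : SelfDual A.2 := hA.1.2.1
  have hsuperTri {A : SMat} (hA : IsReducedFishburn 0 (columns A.2)) : SuperTri A.2 :=
    (isReducedFishburn_columns_iff.mp hA).1
  have hreduced : Set.BijOn toReduced (Mset₂ n k)
      {A | columns A.2 ∈ {l | IsReducedFishburn 0 l ∧ weight l.sum = (n, k)}} := by
    refine Set.InvOn.bijOn (f' := extend) ⟨fun A hA => ?_, fun A hA => ?_⟩ (fun A hA => ?_)
      (fun A hA => ?_)
    · simp only [toReduced, extend, (hselfDual hA).selfDualExtension_reduced]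
    · simp only [toReduced, extend, (hsuperTri hA.1).reduced_selfDualExtension]
    · exact (mem_Mset₂_iff (hselfDual hA)).mp hA
    · refine (mem_Mset₂_iff selfDual_selfDualExtension).mpr ?_
      rwa [(hsuperTri hA.1).reduced_selfDualExtension]
  exact (bijOn_columns fun l hl => hl.1.vanishesFrom_length).comp hreduced

/-- `|M(n,k)| = 2 |RM(n,k)|` for all `n ≥ 1`, `k ≥ 0`. -/
theorem stmt14 (n k : ℕ) (hn : 1 ≤ n) :
    (Mset₂ n k).ncard = 2 * (RMset₂ n k).ncard := by
  have hnil : [] ∉ {l | IsColFishburn 0 l ∧ weight l.sum = (n, k)} := fun h => by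
    have hn0 : 0 = n := congrArg Prod.fst h.2
    lia
  rw [(bijOn_columns_reduced n k).ncard_eq, ← (bijOn_assemble (n, k)).ncard_eq,
    ncard_setOf_append_toList_mem hnil, (bijOn_columns_dual n k).ncard_eq]
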